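/- Let q be a probability distribution on [0,2π) that is invariant under the maps θ ↦ −θ and θ ↦ θ + π/2 (mod 2π), and let Q_T be the q-Kac walk of length T on ℝ^{d×d}. Let ξ be a uniform random vector in {±1}^d conditioned on ∏_{i=1}^d ξ_i = 1, independent of the walk, and let D_ξ be the diagonal matrix with diagonal ξ. If d · exp(−T/(d−1)) < 1, then the total variation distance between the law of Q_T and the law of Q_T D_ξ is at most d·exp(−T/(d−1)) / (1 − d·exp(−T/(d−1))). -/

import Mathlib

noncomputable section

open MeasureTheory Real
open scoped ENNReal

namespace KacJL

instance matrixMeasurableSpace {m n : Type*} : MeasurableSpace (Matrix m n ℝ) :=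
  inferInstanceAs (MeasurableSpace (m → n → ℝ))

/-- The rotation by angle `θ` in the `(i,j)` coordinate plane of `ℝ^d`. -/
def rotM (d : ℕ) (i j : Fin d) (θ : ℝ) : Matrix (Fin d) (Fin d) ℝ :=
  Matrix.of fun k l =>
    if k = i ∧ l = i then Real.cos θ
    else if k = i ∧ l = j then -Real.sin θ
    else if k = j ∧ l = i then Real.sin θ
    else if k = j ∧ l = j then Real.cos θ
    else if k = l then 1 else 0

/-- The uniform distribution on pairs of distinct coordinates in `Fin d`. -/
def pairUniform (d : ℕ) : Measure (Fin d × Fin d) :=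
  ((d * (d - 1) : ℕ) : ℝ≥0∞)⁻¹ •
    (Measure.count.restrict {p : Fin d × Fin d | p.1 ≠ p.2})

/-- The uniform distribution on `[0, 2π)`. -/
def angleUniform : Measure ℝ :=
  (ENNReal.ofReal (2 * Real.pi))⁻¹ • (volume.restrict (Set.Ico 0 (2 * Real.pi)))

/-- The distribution of the update variables of one step of the `q`-Kac walk. -/
def qKacParam (d : ℕ) (q : Measure ℝ) : Measure ((Fin d × Fin d) × ℝ) :=
  (pairUniform d).prod q

/-- The product `R_{i_T,j_T,θ_T} ⋯ R_{i_1,j_1,θ_1}` of the rotations determined by the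
update variables `ω`. -/
def kacMatrix {d T : ℕ} (ω : Fin T → (Fin d × Fin d) × ℝ) : Matrix (Fin d) (Fin d) ℝ :=
  ((List.ofFn fun t => rotM d (ω t).1.1 (ω t).1.2 (ω t).2).reverse).prod

/-- The law of the `q`-Kac walk of length `T` on `ℝ^d`. -/
def qKacMeasure (d T : ℕ) (q : Measure ℝ) : Measure (Matrix (Fin d) (Fin d) ℝ) :=
  Measure.map kacMatrix (Measure.pi fun _ : Fin T => qKacParam d q)

/-- Reduction of a real number modulo `2π` to `[0, 2π)`. -/
def mod2pi (x : ℝ) : ℝ := 2 * Real.pi * Int.fract (x / (2 * Real.pi))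

/-- The uniform distribution on sign vectors `ξ ∈ {±1}^d` conditioned on `∏ i ξ_i = 1`. -/
def signMeasure (d : ℕ) : Measure (Fin d → ℝ) :=
  ((2 ^ (d - 1) : ℕ) : ℝ≥0∞)⁻¹ •
    (Measure.count.restrict
      {v : Fin d → ℝ | (∀ i, v i = 1 ∨ v i = -1) ∧ ∏ i, v i = 1})

/-- The total variation distance between two measures. -/
def tvDist {α : Type*} [MeasurableSpace α] (μ ν : Measure α) : ℝ :=
  ⨆ s : {s : Set α // MeasurableSet s}, |(μ s).toReal - (ν s).toReal|

/-!
Condition on the sequence of coordinate pairs. A half-turn of one angle multiplies its rotation on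
the right by the sign flip of the two coordinates, and commuting a sign matrix past a rotation at
most negates the angle. Since the angles are symmetric, the conditional law of `Q_T` is invariant
under right multiplication by the flip of every pair drawn. When the graph of the drawn pairs is
connected, these flips generate all sign matrices of determinant `1`, so `Q_T` and `Q_T D_ξ` have
the same conditional law. Hence the total variation distance is at most the probability that the
graph is disconnected. In that case no pair crosses the boundary of some nonempty `S` with
`2|S| ≤ d`, which has probability at most `exp(-T/(d-1)) ^ |S|` for each `S`.
-/

section SignVectors

variable {ι : Type*}

/-- The sign vectors `v ∈ {±1}^ι` with product `1`. -/
def evenSigns (ι : Type*) [Fintype ι] : Set (ι → ℝ) :=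
  {v | (∀ i, v i = 1 ∨ v i = -1) ∧ ∏ i, v i = 1}

/-- The vector of signs that flips the coordinates `i` and `j`; it is `1` when `i = j`, so that
`pairFlip i j * pairFlip j k = pairFlip i k` holds without exception. -/
def pairFlip [DecidableEq ι] (i j : ι) : ι → ℝ :=
  Pi.mulSingle i (-1) * Pi.mulSingle j (-1)

section Flip

variable [DecidableEq ι]

lemma pairFlip_apply (i j k : ι) :
    pairFlip i j k = (if k = i then -1 else 1) * (if k = j then -1 else 1) := by
  simp only [pairFlip, Pi.mul_apply, Pi.mulSingle_apply]

lemma pairFlip_eq_one_or_neg_one (i j k : ι) : pairFlip i j k = 1 ∨ pairFlip i j k = -1 := by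
  rw [pairFlip_apply]
  split_ifs <;> simp

lemma pairFlip_self (i : ι) : pairFlip i i = 1 := by
  rw [pairFlip, ← Pi.mulSingle_mul, neg_one_mul, neg_neg, Pi.mulSingle_one]

lemma pairFlip_comm (i j : ι) : pairFlip i j = pairFlip j i := mul_comm _ _

lemma pairFlip_mul_pairFlip (i j k : ι) : pairFlip i j * pairFlip j k = pairFlip i k := by
  calc pairFlip i j * pairFlip j k
      = Pi.mulSingle i (-1) * pairFlip j j * Pi.mulSingle k (-1) := by
        simp only [pairFlip, mul_assoc]
    _ = pairFlip i k := by rw [pairFlip_self, mul_one, pairFlip]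

lemma pairFlip_mem_of_reachable {G : SimpleGraph ι} {M : Submonoid (ι → ℝ)}
    (hM : ∀ i j, G.Adj i j → pairFlip i j ∈ M) {i j : ι} (hij : G.Reachable i j) :
    pairFlip i j ∈ M := by
  obtain ⟨w⟩ := hij
  induction w with
  | nil => rw [pairFlip_self]; exact one_mem M
  | cons hadj _ ih => rw [← pairFlip_mul_pairFlip]; exact mul_mem (hM _ _ hadj) ih

-- Fixing a base point `o`, the vector `v` is the product of the flips of `o` with each `-1` of `v`;
-- the sign collected at `o` is `∏ i, v i = 1`.
lemma evenSigns_subset_of_preconnected [Fintype ι] {G : SimpleGraph ι} (hG : G.Preconnected)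
    {M : Submonoid (ι → ℝ)} (hM : ∀ i j, G.Adj i j → pairFlip i j ∈ M) :
    evenSigns ι ⊆ M := by
  rintro v ⟨hsign, hprod⟩
  rcases isEmpty_or_nonempty ι with _ | ⟨⟨o⟩⟩
  · rw [Subsingleton.elim v 1]
    exact one_mem M
  have hbase : ∏ i, (Pi.mulSingle o (v i) : ι → ℝ) = 1 := by
    rw [← Pi.mulSingle_one o, ← hprod]
    exact (map_prod (MonoidHom.mulSingle (fun _ : ι => ℝ) o) v Finset.univ).symm
  have hv : v = ∏ i, (Pi.mulSingle o (v i) * Pi.mulSingle i (v i) : ι → ℝ) := by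
    rw [Finset.prod_mul_distrib, hbase, one_mul, Finset.univ_prod_mulSingle]
  rw [hv]
  refine prod_mem fun i _ => ?_
  rcases hsign i with h | h <;> rw [h]
  · simp only [Pi.mulSingle_one, mul_one, one_mem]
  · exact pairFlip_mem_of_reachable hM (hG o i)

end Flip

variable [Fintype ι]

lemma evenSigns_finite : (evenSigns ι).Finite :=
  (Set.Finite.pi' fun _ : ι => Set.toFinite {(1 : ℝ), -1}).subset fun _ hv => hv.1

-- Summing `1 + ∏ i, v i`, which is `2` or `0`, over all sign vectors counts the even ones twice.
lemma ncard_evenSigns : (evenSigns ι).ncard = 2 ^ (Fintype.card ι - 1) := by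
  classical
  rcases isEmpty_or_nonempty ι with _ | _
  · have : evenSigns ι = {1} := by ext v; simp [evenSigns, Subsingleton.elim v 1]
    simp [this]
  set S : Finset (ι → ℝ) := Fintype.piFinset fun _ => {1, -1}
  have hset : evenSigns ι = ↑(S.filter fun v => ∏ i, v i = 1) := by
    ext v; simp [evenSigns, S]
  have hcard : S.card = 2 ^ Fintype.card ι := by
    simp [S, Finset.card_pair (show (1 : ℝ) ≠ -1 by norm_num)]
  have hsum : ∑ v ∈ S, ∏ i, v i = 0 := by
    rw [← Finset.prod_univ_sum (fun _ => ({1, -1} : Finset ℝ)) fun _ x => x,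
      Finset.sum_pair (by norm_num)]
    simp
  have hterm : ∀ v ∈ S, 1 + ∏ i, v i = if ∏ i, v i = 1 then 2 else 0 := by
    intro v hv
    have hprod : ∏ i, v i = 1 ∨ ∏ i, v i = -1 := by
      refine Finset.prod_induction v (fun x => x = 1 ∨ x = -1) ?_ (Or.inl rfl) fun i _ => ?_
      · rintro a b (rfl | rfl) (rfl | rfl) <;> simp
      · simpa using Fintype.mem_piFinset.1 hv i
    rcases hprod with h | h <;> rw [h] <;> norm_num
  have htwice : (2 : ℝ) ^ Fintype.card ι = (S.filter fun v => ∏ i, v i = 1).card * 2 := by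
    calc (2 : ℝ) ^ Fintype.card ι = ∑ v ∈ S, (1 + ∏ i, v i) := by
          rw [Finset.sum_add_distrib, hsum]; simp [hcard]
      _ = (S.filter fun v => ∏ i, v i = 1).card * 2 := by
          rw [Finset.sum_congr rfl hterm, ← Finset.sum_filter, Finset.sum_const, nsmul_eq_mul]
  have hpow := pow_sub_one_mul (Fintype.card_ne_zero (α := ι)) (2 : ℝ)
  rw [hset, Set.ncard_coe_finset]
  exact_mod_cast mul_right_cancel₀ two_ne_zero (htwice.symm.trans hpow.symm)

lemma signMeasure_eq_uniformOn (d : ℕ) :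
    signMeasure d = ProbabilityTheory.uniformOn (evenSigns (Fin d)) := by
  have hcount : Measure.count (evenSigns (Fin d)) = ((2 ^ (d - 1) : ℕ) : ℝ≥0∞) := by
    rw [Measure.count_apply_finite _ evenSigns_finite,
      ← Set.ncard_eq_toFinset_card _ evenSigns_finite, ncard_evenSigns, Fintype.card_fin]
  rw [ProbabilityTheory.uniformOn, ProbabilityTheory.cond, hcount]
  rfl

lemma evenSigns_nonempty : (evenSigns ι).Nonempty := ⟨1, by simp [evenSigns]⟩

instance isProbabilityMeasure_signMeasure (d : ℕ) : IsProbabilityMeasure (signMeasure d) := by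
  rw [signMeasure_eq_uniformOn]
  exact ProbabilityTheory.isProbabilityMeasure_uniformOn evenSigns_finite evenSigns_nonempty

lemma ae_mem_evenSigns (d : ℕ) : ∀ᵐ v ∂signMeasure d, v ∈ evenSigns (Fin d) :=
  Measure.ae_smul_measure (ae_restrict_mem evenSigns_finite.measurableSet) _

end SignVectors

section PairGraph

/-- The graph on `V` whose edges are the non-degenerate pairs listed by `e`. -/
def pairGraph {τ V : Type*} (e : τ → V × V) : SimpleGraph V :=
  SimpleGraph.fromRel fun i j => ∃ t, e t = (i, j)

lemma exists_finset_closed_of_not_preconnected {V : Type*} [Fintype V] {G : SimpleGraph V}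
    (hG : ¬ G.Preconnected) :
    ∃ S : Finset V, S.Nonempty ∧ 2 * S.card ≤ Fintype.card V ∧
      ∀ i j, G.Adj i j → (i ∈ S ↔ j ∈ S) := by
  classical
  obtain ⟨u, v, huv⟩ : ∃ u v, ¬ G.Reachable u v := by
    simpa only [SimpleGraph.Preconnected, not_forall] using hG
  set S : Finset V := Finset.univ.filter (G.Reachable u)
  have hclosed : ∀ i j, G.Adj i j → (i ∈ S ↔ j ∈ S) := by
    intro i j hij
    simp only [S, Finset.mem_filter, Finset.mem_univ, true_and]
    exact ⟨fun h => h.trans hij.reachable, fun h => h.trans hij.symm.reachable⟩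
  have hu : u ∈ S := by simp [S]
  have hv : v ∈ Sᶜ := by simpa [S] using huv
  have hcard := Finset.card_add_card_compl S
  rcases le_or_gt (2 * S.card) (Fintype.card V) with hle | hlt
  · exact ⟨S, ⟨u, hu⟩, hle, hclosed⟩
  · refine ⟨Sᶜ, ⟨v, hv⟩, by omega, fun i j hij => ?_⟩
    simp only [Finset.mem_compl, hclosed i j hij]

lemma exists_finset_pairs_closed_of_not_preconnected {τ V : Type*} [Fintype V] {e : τ → V × V}
    (he : ¬ (pairGraph e).Preconnected) :
    ∃ S : Finset V, S.Nonempty ∧ 2 * S.card ≤ Fintype.card V ∧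
      ∀ t, ((e t).1 ∈ S ↔ (e t).2 ∈ S) := by
  obtain ⟨S, hne, hcard, hS⟩ := exists_finset_closed_of_not_preconnected he
  refine ⟨S, hne, hcard, fun t => ?_⟩
  by_cases heq : (e t).1 = (e t).2
  · rw [heq]
  · exact hS _ _ ⟨heq, Or.inl ⟨t, rfl⟩⟩

lemma card_filter_fst_ne_snd (V : Type*) [Fintype V] [DecidableEq V] :
    (Finset.univ.filter fun p : V × V => p.1 ≠ p.2).card =
      Fintype.card V * (Fintype.card V - 1) := by
  rw [← Finset.card_univ, Nat.mul_sub_one, ← Finset.offDiag_card]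
  congr 1
  ext p
  simp

lemma pairUniform_eq_uniformOn (d : ℕ) :
    pairUniform d = ProbabilityTheory.uniformOn {p : Fin d × Fin d | p.1 ≠ p.2} := by
  have hcount : Measure.count {p : Fin d × Fin d | p.1 ≠ p.2} = ((d * (d - 1) : ℕ) : ℝ≥0∞) := by
    rw [← Finset.coe_filter_univ, Measure.count_apply_finset, card_filter_fst_ne_snd,
      Fintype.card_fin]
  rw [ProbabilityTheory.uniformOn, ProbabilityTheory.cond, hcount]
  rfl

instance isFiniteMeasure_pairUniform (d : ℕ) : IsFiniteMeasure (pairUniform d) := by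
  rw [pairUniform_eq_uniformOn, ProbabilityTheory.uniformOn]
  infer_instance

lemma isProbabilityMeasure_pairUniform {d : ℕ} (hd : 2 ≤ d) :
    IsProbabilityMeasure (pairUniform d) := by
  rw [pairUniform_eq_uniformOn]
  exact ProbabilityTheory.isProbabilityMeasure_uniformOn (Set.toFinite _)
    ⟨(⟨0, by omega⟩, ⟨1, by omega⟩), by simp⟩

lemma pairUniform_real_crossing {d : ℕ} (S : Finset (Fin d)) :
    (pairUniform d).real {p | (p.1 ∈ S ↔ p.2 ∈ S)}ᶜ =
      2 * S.card * Sᶜ.card / (d * (d - 1) : ℕ) := by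
  have hset : {p : Fin d × Fin d | (p.1 ∈ S ↔ p.2 ∈ S)}ᶜ ∩ {p | p.1 ≠ p.2} =
      ↑(S ×ˢ Sᶜ ∪ Sᶜ ×ˢ S) := by
    ext p
    simp only [Set.mem_inter_iff, Set.mem_compl_iff, Set.mem_ofPred_eq, SetLike.mem_coe,
      Finset.mem_union, Finset.mem_product, Finset.mem_compl]
    grind
  have hdisj : Disjoint (S ×ˢ Sᶜ) (Sᶜ ×ˢ S) :=
    Finset.disjoint_product.2 (Or.inl disjoint_compl_right)
  rw [pairUniform, measureReal_ennreal_smul_apply,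
    measureReal_restrict_apply (Set.toFinite _).measurableSet, hset, measureReal_def,
    Measure.count_apply_finset, Finset.card_union_of_disjoint hdisj, Finset.card_product,
    Finset.card_product, ENNReal.toReal_inv, ENNReal.toReal_natCast, ENNReal.toReal_natCast]
  push_cast
  ring

lemma pairUniform_real_noncrossing_le {d : ℕ} {S : Finset (Fin d)} (hne : S.Nonempty)
    (hS : 2 * S.card ≤ d) :
    (pairUniform d).real {p | (p.1 ∈ S ↔ p.2 ∈ S)} ≤ exp (-S.card / (d - 1)) := by
  have hpos := hne.card_pos
  have hd : 2 ≤ d := by omega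
  have := isProbabilityMeasure_pairUniform hd
  have hcompl : (Sᶜ.card : ℝ) = d - S.card := by
    rw [eq_sub_iff_add_eq']
    exact_mod_cast (Finset.card_add_card_compl S).trans (Fintype.card_fin d)
  have hS' : 2 * (S.card : ℝ) ≤ d := mod_cast hS
  have hd' : (2 : ℝ) ≤ d := mod_cast hd
  have hd1 : (0 : ℝ) < d - 1 := by linarith
  have hcross : (S.card : ℝ) / (d - 1) ≤ (pairUniform d).real {p | (p.1 ∈ S ↔ p.2 ∈ S)}ᶜ := by
    rw [pairUniform_real_crossing, hcompl, Nat.cast_mul, Nat.cast_pred (by omega),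
      div_le_div_iff₀ hd1 (by positivity)]
    have : (0 : ℝ) ≤ S.card * (d - 1) := by positivity
    nlinarith
  calc (pairUniform d).real {p | (p.1 ∈ S ↔ p.2 ∈ S)}
      = 1 - (pairUniform d).real {p | (p.1 ∈ S ↔ p.2 ∈ S)}ᶜ := by
        rw [probReal_compl_eq_one_sub (Set.toFinite _).measurableSet, sub_sub_cancel]
    _ ≤ -S.card / (d - 1) + 1 := by rw [neg_div]; linarith
    _ ≤ exp (-S.card / (d - 1)) := add_one_le_exp _

lemma pi_pairUniform_real_noncrossing_le {d : ℕ} (T : ℕ) {S : Finset (Fin d)} (hne : S.Nonempty)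
    (hS : 2 * S.card ≤ d) :
    (Measure.pi fun _ : Fin T => pairUniform d).real {e | ∀ t, ((e t).1 ∈ S ↔ (e t).2 ∈ S)} ≤
      exp (-T / (d - 1)) ^ S.card := by
  have hset : {e : Fin T → Fin d × Fin d | ∀ t, ((e t).1 ∈ S ↔ (e t).2 ∈ S)} =
      Set.univ.pi fun _ => {p | (p.1 ∈ S ↔ p.2 ∈ S)} := by
    ext e
    simp
  calc _ = (pairUniform d).real {p | (p.1 ∈ S ↔ p.2 ∈ S)} ^ T := by
        rw [hset, measureReal_def, Measure.pi_pi, Finset.prod_const, Finset.card_univ,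
          Fintype.card_fin, ENNReal.toReal_pow, measureReal_def]
    _ ≤ exp (-S.card / (d - 1)) ^ T := by
        gcongr
        exact pairUniform_real_noncrossing_le hne hS
    _ = exp (-T / (d - 1)) ^ S.card := by
        rw [← exp_nat_mul, ← exp_nat_mul]
        congr 1
        ring

lemma sum_pow_card_nonempty {V : Type*} [Fintype V] (x : ℝ) :
    ∑ S : Finset V with S.Nonempty, x ^ S.card = (1 + x) ^ Fintype.card V - 1 := by
  classical
  have hall := Fintype.sum_pow_mul_eq_add_pow V x 1
  simp only [one_pow, mul_one] at hall
  rw [eq_sub_iff_add_eq, add_comm 1 x, ← hall,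
    ← Finset.sum_filter_add_sum_filter_not Finset.univ Finset.Nonempty]
  simp [Finset.not_nonempty_iff_eq_empty, Finset.filter_eq']

lemma pi_pairUniform_real_not_preconnected_le (d T : ℕ) :
    (Measure.pi fun _ : Fin T => pairUniform d).real {e | ¬ (pairGraph e).Preconnected} ≤
      (1 + exp (-T / (d - 1))) ^ d - 1 := by
  classical
  set P : Measure (Fin T → Fin d × Fin d) := Measure.pi fun _ => pairUniform d
  set F : Finset (Finset (Fin d)) := {S | S.Nonempty ∧ 2 * S.card ≤ d}
  have hcover : {e : Fin T → Fin d × Fin d | ¬ (pairGraph e).Preconnected} ⊆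
      ⋃ S ∈ F, {e | ∀ t, ((e t).1 ∈ S ↔ (e t).2 ∈ S)} := by
    intro e he
    obtain ⟨S, hne, hcard, hS⟩ := exists_finset_pairs_closed_of_not_preconnected he
    rw [Fintype.card_fin] at hcard
    exact Set.mem_biUnion (Finset.mem_filter.2 ⟨Finset.mem_univ S, hne, hcard⟩) hS
  calc P.real {e | ¬ (pairGraph e).Preconnected}
      ≤ P.real (⋃ S ∈ F, {e | ∀ t, ((e t).1 ∈ S ↔ (e t).2 ∈ S)}) :=
        measureReal_mono hcover (measure_ne_top P _)
    _ ≤ ∑ S ∈ F, P.real {e | ∀ t, ((e t).1 ∈ S ↔ (e t).2 ∈ S)} :=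
        measureReal_biUnion_finset_le F _
    _ ≤ ∑ S ∈ F, exp (-T / (d - 1)) ^ S.card := by
        refine Finset.sum_le_sum fun S hS => ?_
        obtain ⟨hne, hcard⟩ := (Finset.mem_filter.1 hS).2
        exact pi_pairUniform_real_noncrossing_le T hne hcard
    _ ≤ ∑ S : Finset (Fin d) with S.Nonempty, exp (-T / (d - 1)) ^ S.card := by
        refine Finset.sum_le_sum_of_subset_of_nonneg ?_ fun _ _ _ => by positivity
        exact Finset.monotone_filter_right _ fun S _ hS => hS.1
    _ = (1 + exp (-T / (d - 1))) ^ d - 1 := by rw [sum_pow_card_nonempty, Fintype.card_fin]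

lemma one_add_pow_sub_one_le {n : ℕ} {x : ℝ} (hx : 0 ≤ x) (hnx : n * x < 1) :
    (1 + x) ^ n - 1 ≤ n * x / (1 - n * x) := by
  have hpos : 0 < 1 - n * x := sub_pos.2 hnx
  have hpow : (1 + x) ^ n ≤ (1 - n * x)⁻¹ := by
    calc (1 + x) ^ n ≤ exp x ^ n := by
          gcongr
          rw [add_comm]
          exact add_one_le_exp x
      _ = (exp (-(n * x)))⁻¹ := by rw [← exp_nat_mul, exp_neg, inv_inv]
      _ ≤ (1 - n * x)⁻¹ := inv_anti₀ hpos (one_sub_le_exp_neg _)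
  calc (1 + x) ^ n - 1 ≤ (1 - n * x)⁻¹ - 1 := by gcongr
    _ = n * x / (1 - n * x) := by field_simp; ring

end PairGraph

section TotalVariation

variable {α β M : Type*} [MeasurableSpace α] [MeasurableSpace β] [MeasurableSpace M]

lemma measurable_map_section {ν : Measure β} [SFinite ν] {f : α × β → M} (hf : Measurable f) :
    Measurable fun x => ν.map fun y => f (x, y) := by
  refine Measure.measurable_of_measurable_coe _ fun A hA => ?_
  have hval : ∀ x, ν.map (fun y => f (x, y)) A = ν (Prod.mk x ⁻¹' (f ⁻¹' A)) := fun x =>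
    Measure.map_apply (hf.comp measurable_prodMk_left) hA
  simp only [hval]
  exact measurable_measure_prodMk_left (hf hA)

lemma map_prod_eq_bind {μ : Measure α} {ν : Measure β} [SFinite ν] {f : α × β → M}
    (hf : Measurable f) : (μ.prod ν).map f = μ.bind fun x => ν.map fun y => f (x, y) := by
  ext A hA
  rw [Measure.map_apply hf hA, Measure.prod_apply (hf hA),
    Measure.bind_apply hA (measurable_map_section hf).aemeasurable]
  exact lintegral_congr fun x => (Measure.map_apply (hf.comp measurable_prodMk_left) hA).symm

variable {μ : Measure α} {κ η : α → Measure β} {s : Set α}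

lemma bind_apply_le_bind_apply_add [∀ a, IsProbabilityMeasure (κ a)] (hκ : Measurable κ)
    (hη : Measurable η) (h : ∀ a ∉ s, κ a = η a) {A : Set β} (hA : MeasurableSet A) :
    μ.bind κ A ≤ μ.bind η A + μ s := by
  rw [Measure.bind_apply hA hκ.aemeasurable, Measure.bind_apply hA hη.aemeasurable,
    ← measure_toMeasurable s, ← lintegral_indicator_one (measurableSet_toMeasurable μ s),
    ← lintegral_add_right _ (measurable_one.indicator (measurableSet_toMeasurable μ s))]
  refine lintegral_mono fun a => ?_
  by_cases ha : a ∈ toMeasurable μ s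
  · rw [Set.indicator_of_mem ha]
    exact prob_le_one.trans le_add_self
  · rw [h a fun has => ha (subset_toMeasurable μ s has)]
    exact le_self_add

lemma tvDist_bind_le [IsFiniteMeasure μ] [∀ a, IsProbabilityMeasure (κ a)]
    [∀ a, IsProbabilityMeasure (η a)] (hκ : Measurable κ) (hη : Measurable η)
    (h : ∀ a ∉ s, κ a = η a) : tvDist (μ.bind κ) (μ.bind η) ≤ μ.real s := by
  have hfinite : ∀ ρ : α → Measure β, (∀ a, IsProbabilityMeasure (ρ a)) → Measurable ρ →
      ∀ A, μ.bind ρ A ≠ ⊤ := by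
    intro ρ hρ hm A
    have : IsFiniteMeasure (μ.bind ρ) := ⟨by
      simp [Measure.bind_apply MeasurableSet.univ hm.aemeasurable, measure_lt_top]⟩
    exact measure_ne_top _ _
  refine Real.iSup_le (fun ⟨A, hA⟩ => ?_) measureReal_nonneg
  have hκη := ENNReal.toReal_mono (ENNReal.add_ne_top.2 ⟨hfinite η ‹_› hη A, measure_ne_top μ s⟩)
    (bind_apply_le_bind_apply_add hκ hη h hA)
  have hηκ := ENNReal.toReal_mono (ENNReal.add_ne_top.2 ⟨hfinite κ ‹_› hκ A, measure_ne_top μ s⟩)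
    (bind_apply_le_bind_apply_add hη hκ (fun a ha => (h a ha).symm) hA)
  rw [ENNReal.toReal_add (hfinite η ‹_› hη A) (measure_ne_top μ s)] at hκη
  rw [ENNReal.toReal_add (hfinite κ ‹_› hκ A) (measure_ne_top μ s)] at hηκ
  rw [measureReal_def, abs_sub_le_iff]
  constructor <;> linarith

end TotalVariation

section Convolution

variable {α M : Type*} [MeasurableSpace α] [Monoid M] [MeasurableSpace M] [MeasurableMul₂ M]
  {κ : α → Measure M} {ν : Measure M} [SFinite ν]

lemma mconv_apply (μ : Measure M) {A : Set M} (hA : MeasurableSet A) :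
    (μ ∗ₘ ν) A = ∫⁻ x, ν ((x * ·) ⁻¹' A) ∂μ := by
  rw [Measure.mconv, Measure.map_apply measurable_mul hA, Measure.prod_apply (measurable_mul hA)]
  rfl

lemma measurable_mconv_apply (ν : Measure M) [SFinite ν] {A : Set M} (hA : MeasurableSet A) :
    Measurable fun x => ν ((x * ·) ⁻¹' A) :=
  measurable_measure_prodMk_left (measurable_mul hA)

lemma measurable_mconv (hκ : Measurable κ) : Measurable fun a => κ a ∗ₘ ν := by
  refine Measure.measurable_of_measurable_coe _ fun A hA => ?_
  simp only [mconv_apply _ hA]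
  exact (Measure.measurable_lintegral (measurable_mconv_apply ν hA)).comp hκ

lemma bind_mconv {μ : Measure α} (hκ : Measurable κ) :
    μ.bind κ ∗ₘ ν = μ.bind fun a => κ a ∗ₘ ν := by
  ext A hA
  rw [mconv_apply _ hA, Measure.bind_apply hA (measurable_mconv hκ).aemeasurable,
    Measure.lintegral_bind hκ.aemeasurable (measurable_mconv_apply ν hA).aemeasurable]
  simp only [mconv_apply _ hA]

/-- The elements `x` such that `Q * x` has law `μ` whenever `Q` has law `μ`. -/
def rightStabilizer (μ : Measure M) [SFinite μ] : Submonoid M where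
  carrier := {x | μ ∗ₘ Measure.dirac x = μ}
  one_mem' := Measure.mconv_dirac_one μ
  mul_mem' {x y} (hx : μ ∗ₘ Measure.dirac x = μ) (hy : μ ∗ₘ Measure.dirac y = μ) := by
    change μ ∗ₘ Measure.dirac (x * y) = μ
    rw [← Measure.dirac_mconv_dirac, ← Measure.mconv_assoc, hx, hy]

lemma mem_rightStabilizer {μ : Measure M} [SFinite μ] {x : M} :
    x ∈ rightStabilizer μ ↔ μ ∗ₘ Measure.dirac x = μ := Iff.rfl

lemma mem_rightStabilizer_mconv_of_right {μ : Measure M} [SFinite μ] {x : M}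
    (hx : x ∈ rightStabilizer ν) : x ∈ rightStabilizer (μ ∗ₘ ν) := by
  rw [mem_rightStabilizer] at *
  rw [Measure.mconv_assoc, hx]

lemma mem_rightStabilizer_mconv_of_left {μ : Measure M} [SFinite μ] {x : M}
    (hx : x ∈ rightStabilizer μ) (hcomm : ν ∗ₘ Measure.dirac x = Measure.dirac x ∗ₘ ν) :
    x ∈ rightStabilizer (μ ∗ₘ ν) := by
  rw [mem_rightStabilizer] at *
  rw [Measure.mconv_assoc, hcomm, ← Measure.mconv_assoc, hx]

lemma mconv_map_eq_self_of_ae_mem_rightStabilizer {σ : Measure α} [IsProbabilityMeasure σ]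
    {μ : Measure M} [SFinite μ] {f : α → M} (hf : Measurable f)
    (h : ∀ᵐ a ∂σ, f a ∈ rightStabilizer μ) : μ ∗ₘ σ.map f = μ := by
  ext A hA
  have hmul : MeasurableSet ((fun p : M × M => p.1 * p.2) ⁻¹' A) := measurable_mul hA
  calc (μ ∗ₘ σ.map f) A = ∫⁻ a, μ ((· * f a) ⁻¹' A) ∂σ := by
        rw [Measure.mconv, Measure.map_apply measurable_mul hA, Measure.prod_apply_symm hmul,
          lintegral_map (measurable_measure_prodMk_right hmul) hf]
        rfl
    _ = ∫⁻ _, μ A ∂σ := by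
        refine lintegral_congr_ae (h.mono fun a ha => ?_)
        rw [mem_rightStabilizer, Measure.mconv_dirac] at ha
        exact (Measure.map_apply (measurable_mul_const _) hA).symm.trans (congrArg (· A) ha)
    _ = μ A := by simp

end Convolution

section KacWalk

instance measurableMul₂_matrix {n : Type*} [Fintype n] : MeasurableMul₂ (Matrix n n ℝ) where
  measurable_mul := by
    refine measurable_pi_lambda _ fun i => measurable_pi_lambda _ fun j => ?_
    simp only [Matrix.mul_apply]
    have hentry : ∀ i j, Measurable fun A : Matrix n n ℝ => A i j := fun i j =>
      (measurable_pi_apply j).comp (measurable_pi_apply i)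
    exact Finset.measurable_fun_sum _ fun k _ =>
      ((hentry i k).comp measurable_fst).mul ((hentry k j).comp measurable_snd)

lemma measurable_diagonal {n : Type*} [DecidableEq n] :
    Measurable (Matrix.diagonal : (n → ℝ) → Matrix n n ℝ) := by
  refine measurable_pi_lambda _ fun i => measurable_pi_lambda _ fun j => ?_
  simp only [Matrix.diagonal_apply]
  split_ifs <;> fun_prop

lemma mod2pi_eq_sub (x : ℝ) : mod2pi x = x - ⌊x / (2 * π)⌋ * (2 * π) := by
  rw [mod2pi, Int.fract]
  field_simp

lemma mod2pi_mod2pi_add (x a : ℝ) : mod2pi (mod2pi x + a) = mod2pi (x + a) := by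
  have hdiv : (mod2pi x + a) / (2 * π) = (x + a) / (2 * π) - ⌊x / (2 * π)⌋ := by
    rw [mod2pi_eq_sub]
    field_simp
    ring
  rw [mod2pi, hdiv, Int.fract_sub_intCast, ← mod2pi]

lemma measurable_mod2pi : Measurable mod2pi :=
  (measurable_fract.comp (measurable_id.div_const _)).const_mul _

lemma map_mod2pi_add_add {q : Measure ℝ} {a b : ℝ} (ha : q.map (fun θ => mod2pi (θ + a)) = q)
    (hb : q.map (fun θ => mod2pi (θ + b)) = q) : q.map (fun θ => mod2pi (θ + (a + b))) = q := by
  have hmeas : ∀ c, Measurable fun θ => mod2pi (θ + c) := fun c =>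
    measurable_mod2pi.comp (measurable_add_const c)
  calc q.map (fun θ => mod2pi (θ + (a + b)))
      = (q.map fun θ => mod2pi (θ + a)).map fun θ => mod2pi (θ + b) := by
        rw [Measure.map_map (hmeas b) (hmeas a)]
        simp only [Function.comp_def, mod2pi_mod2pi_add, add_assoc]
    _ = q := by rw [ha, hb]

variable {d : ℕ}

lemma rotM_mod2pi (i j : Fin d) (θ : ℝ) : rotM d i j (mod2pi θ) = rotM d i j θ := by
  rw [rotM, rotM, mod2pi_eq_sub, cos_sub_int_mul_two_pi, sin_sub_int_mul_two_pi]

lemma rotM_add_pi {i j : Fin d} (hij : i ≠ j) (θ : ℝ) :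
    rotM d i j (θ + π) = rotM d i j θ * Matrix.diagonal (pairFlip i j) := by
  ext k l
  rw [Matrix.mul_diagonal, pairFlip_apply]
  simp only [rotM, Matrix.of_apply, cos_add_pi, sin_add_pi]
  split_ifs <;> grind

lemma rotM_mul_diagonal_of_eq {i j : Fin d} {v : Fin d → ℝ} (h : v i = v j) (θ : ℝ) :
    rotM d i j θ * Matrix.diagonal v = Matrix.diagonal v * rotM d i j θ := by
  ext k l
  simp only [Matrix.mul_diagonal, Matrix.diagonal_mul, rotM, Matrix.of_apply]
  split_ifs <;> grind

lemma rotM_mul_diagonal_of_eq_neg {i j : Fin d} {v : Fin d → ℝ} (h : v i = -v j) (θ : ℝ) :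
    rotM d i j θ * Matrix.diagonal v = Matrix.diagonal v * rotM d i j (-θ) := by
  ext k l
  simp only [Matrix.mul_diagonal, Matrix.diagonal_mul, rotM, Matrix.of_apply, cos_neg, sin_neg]
  split_ifs <;> grind

lemma measurable_rotM : Measurable fun p : (Fin d × Fin d) × ℝ => rotM d p.1.1 p.1.2 p.2 := by
  refine measurable_from_prod_countable_right fun e =>
    measurable_pi_lambda _ fun k => measurable_pi_lambda _ fun l => ?_
  simp only [rotM, Matrix.of_apply]
  split_ifs <;> fun_prop

lemma measurable_rotM_angle (i j : Fin d) : Measurable (rotM d i j) :=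
  measurable_rotM.comp (measurable_prodMk_left (x := (i, j)))

variable {T : ℕ}

lemma kacMatrix_succ (ω : Fin (T + 1) → (Fin d × Fin d) × ℝ) :
    kacMatrix ω = kacMatrix (Fin.tail ω) * rotM d (ω 0).1.1 (ω 0).1.2 (ω 0).2 := by
  simp [kacMatrix, List.ofFn_succ, Fin.tail]

lemma measurable_kacMatrix :
    Measurable (kacMatrix : (Fin T → (Fin d × Fin d) × ℝ) → Matrix (Fin d) (Fin d) ℝ) := by
  induction T with
  | zero => exact Subsingleton.measurable
  | succ T ih =>
    simp only [funext kacMatrix_succ]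
    have htail : Measurable (Fin.tail : (Fin (T + 1) → (Fin d × Fin d) × ℝ) → _) :=
      measurable_pi_lambda _ fun t => measurable_pi_apply t.succ
    exact (ih.comp htail).mul (measurable_rotM.comp (measurable_pi_apply 0))

/-- The law of the `q`-Kac walk conditioned on its sequence `e` of coordinate pairs. -/
def pathLaw (q : Measure ℝ) (e : Fin T → Fin d × Fin d) : Measure (Matrix (Fin d) (Fin d) ℝ) :=
  (Measure.pi fun _ => q).map fun θ => kacMatrix fun t => (e t, θ t)

lemma measurable_kacMatrix_prod : Measurable
    fun p : (Fin T → Fin d × Fin d) × (Fin T → ℝ) => kacMatrix fun t => (p.1 t, p.2 t) :=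
  measurable_kacMatrix.comp (by fun_prop)

lemma measurable_kacMatrix_angles (e : Fin T → Fin d × Fin d) :
    Measurable fun θ : Fin T → ℝ => kacMatrix fun t => (e t, θ t) :=
  measurable_kacMatrix_prod.comp measurable_prodMk_left

variable {q : Measure ℝ}

instance isProbabilityMeasure_pathLaw [IsProbabilityMeasure q] (e : Fin T → Fin d × Fin d) :
    IsProbabilityMeasure (pathLaw q e) :=
  Measure.isProbabilityMeasure_map (measurable_kacMatrix_angles e).aemeasurable

lemma pathLaw_succ [SigmaFinite q] (e : Fin (T + 1) → Fin d × Fin d) :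
    pathLaw q e = pathLaw q (Fin.tail e) ∗ₘ q.map (rotM d (e 0).1 (e 0).2) := by
  have hsplit := (measurePreserving_piFinSuccAbove (fun _ : Fin (T + 1) => q) 0).symm.map_eq
  have htail := measurable_kacMatrix_angles (Fin.tail e)
  have hrot := measurable_rotM_angle (e 0).1 (e 0).2
  rw [pathLaw, ← hsplit, Measure.map_map (measurable_kacMatrix_angles e)
    (MeasurableEquiv.measurable _), ← Measure.prod_swap, Measure.map_map
    ((measurable_kacMatrix_angles e).comp (MeasurableEquiv.measurable _)) measurable_swap,
    pathLaw, Measure.mconv, Measure.map_prod_map _ _ htail hrot,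
    Measure.map_map measurable_mul (htail.prodMap hrot)]
  refine congrArg (Measure.map · _) (funext fun p => ?_)
  exact kacMatrix_succ _

lemma qKacMeasure_eq_bind [SigmaFinite q] :
    qKacMeasure d T q = (Measure.pi fun _ : Fin T => pairUniform d).bind (pathLaw q) := by
  have hsplit := (measurePreserving_arrowProdEquivProdArrow (Fin d × Fin d) ℝ (Fin T)
    (fun _ => pairUniform d) fun _ => q).symm.map_eq
  have hmap := map_prod_eq_bind (μ := Measure.pi fun _ : Fin T => pairUniform d)
    (ν := Measure.pi fun _ : Fin T => q) measurable_kacMatrix_prod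
  rw [qKacMeasure]
  simp only [qKacParam]
  rw [← hsplit, Measure.map_map measurable_kacMatrix (MeasurableEquiv.measurable _)]
  exact hmap

section Symmetry

variable [SFinite q]

lemma pairFlip_mem_rightStabilizer_map_rotM (hpi : q.map (fun θ => mod2pi (θ + π)) = q)
    {i j : Fin d} (hij : i ≠ j) :
    Matrix.diagonal (pairFlip i j) ∈ rightStabilizer (q.map (rotM d i j)) := by
  have hrot := measurable_rotM_angle i j
  have hshift : Measurable fun θ => mod2pi (θ + π) :=
    measurable_mod2pi.comp (measurable_add_const π)
  rw [mem_rightStabilizer, Measure.mconv_dirac, Measure.map_map (measurable_mul_const _) hrot]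
  conv_rhs => rw [← hpi, Measure.map_map hrot hshift]
  simp only [Function.comp_def, rotM_mod2pi, rotM_add_pi hij]

lemma map_rotM_mconv_dirac_diagonal_comm (hneg : q.map (fun θ => mod2pi (-θ)) = q) {i j : Fin d}
    {v : Fin d → ℝ} (hv : v i = v j ∨ v i = -v j) :
    q.map (rotM d i j) ∗ₘ Measure.dirac (Matrix.diagonal v) =
      Measure.dirac (Matrix.diagonal v) ∗ₘ q.map (rotM d i j) := by
  have hrot := measurable_rotM_angle i j
  have hmod : Measurable fun θ => mod2pi (-θ) := measurable_mod2pi.comp measurable_neg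
  rw [Measure.mconv_dirac, Measure.dirac_mconv, Measure.map_map (measurable_mul_const _) hrot]
  rcases hv with h | h
  · rw [Measure.map_map (measurable_const_mul _) hrot]
    simp only [Function.comp_def, rotM_mul_diagonal_of_eq h]
  · conv_rhs => rw [← hneg, Measure.map_map hrot hmod,
      Measure.map_map (measurable_const_mul _) (hrot.comp hmod)]
    simp only [Function.comp_def, rotM_mod2pi, rotM_mul_diagonal_of_eq_neg h]

end Symmetry

variable [IsProbabilityMeasure q]

lemma diagonal_pairFlip_mem_rightStabilizer_pathLaw
    (hneg : q.map (fun θ => mod2pi (-θ)) = q) (hpi : q.map (fun θ => mod2pi (θ + π)) = q)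
    (e : Fin T → Fin d × Fin d) (t : Fin T) (ht : (e t).1 ≠ (e t).2) :
    Matrix.diagonal (pairFlip (e t).1 (e t).2) ∈ rightStabilizer (pathLaw q e) := by
  induction T with
  | zero => exact t.elim0
  | succ T ih =>
    simp only [pathLaw_succ e]
    cases t using Fin.cases with
    | zero =>
      exact mem_rightStabilizer_mconv_of_right (pairFlip_mem_rightStabilizer_map_rotM hpi ht)
    | succ t =>
      refine mem_rightStabilizer_mconv_of_left (ih (Fin.tail e) t ht)
        (map_rotM_mconv_dirac_diagonal_comm hneg ?_)
      rcases pairFlip_eq_one_or_neg_one (e t.succ).1 (e t.succ).2 (e 0).1 with h | h <;>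
      rcases pairFlip_eq_one_or_neg_one (e t.succ).1 (e t.succ).2 (e 0).2 with h' | h' <;>
      simp [h, h']

lemma diagonal_mem_rightStabilizer_pathLaw_of_preconnected
    (hneg : q.map (fun θ => mod2pi (-θ)) = q) (hpi : q.map (fun θ => mod2pi (θ + π)) = q)
    {e : Fin T → Fin d × Fin d} (he : (pairGraph e).Preconnected) {v : Fin d → ℝ}
    (hv : v ∈ evenSigns (Fin d)) : Matrix.diagonal v ∈ rightStabilizer (pathLaw q e) := by
  have hedge : ∀ i j, (pairGraph e).Adj i j →
      pairFlip i j ∈ (rightStabilizer (pathLaw q e)).comap (Matrix.diagonalRingHom (Fin d) ℝ) := by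
    rintro i j ⟨hne, ⟨t, ht⟩ | ⟨t, ht⟩⟩
    · simpa [ht] using
        diagonal_pairFlip_mem_rightStabilizer_pathLaw hneg hpi e t (by simpa [ht] using hne)
    · rw [pairFlip_comm]
      simpa [ht] using
        diagonal_pairFlip_mem_rightStabilizer_pathLaw hneg hpi e t (by simpa [ht] using hne.symm)
  exact evenSigns_subset_of_preconnected he hedge hv

lemma tvDist_qKacMeasure_le_real_not_preconnected
    (hneg : q.map (fun θ => mod2pi (-θ)) = q) (hpi : q.map (fun θ => mod2pi (θ + π)) = q) :
    tvDist (qKacMeasure d T q) (qKacMeasure d T q ∗ₘ (signMeasure d).map Matrix.diagonal) ≤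
      (Measure.pi fun _ : Fin T => pairUniform d).real {e | ¬ (pairGraph e).Preconnected} := by
  have hpath : Measurable (pathLaw q : (Fin T → Fin d × Fin d) → _) := Measurable.of_discrete
  have : IsProbabilityMeasure ((signMeasure d).map Matrix.diagonal) :=
    Measure.isProbabilityMeasure_map measurable_diagonal.aemeasurable
  rw [qKacMeasure_eq_bind, bind_mconv hpath]
  refine tvDist_bind_le hpath (measurable_mconv hpath) fun e he => ?_
  exact (mconv_map_eq_self_of_ae_mem_rightStabilizer measurable_diagonal <|
    (ae_mem_evenSigns d).mono fun v =>
      diagonal_mem_rightStabilizer_pathLaw_of_preconnected hneg hpi (not_not.1 he)).symm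

lemma map_kacMatrix_mul_diagonal_eq_mconv :
    Measure.map (fun z : (Fin T → (Fin d × Fin d) × ℝ) × (Fin d → ℝ) =>
        kacMatrix z.1 * Matrix.diagonal z.2)
      ((Measure.pi fun _ : Fin T => qKacParam d q).prod (signMeasure d)) =
      qKacMeasure d T q ∗ₘ (signMeasure d).map Matrix.diagonal := by
  have : SigmaFinite (qKacParam d q) := by rw [qKacParam]; infer_instance
  rw [qKacMeasure, Measure.mconv,
    Measure.map_prod_map _ _ measurable_kacMatrix measurable_diagonal,
    Measure.map_map measurable_mul (measurable_kacMatrix.prodMap measurable_diagonal)]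
  rfl

end KacWalk

theorem symmetric_kac_sign_invariance_general (d T : ℕ) (q : Measure ℝ) [IsProbabilityMeasure q]
    (hneg : q.map (fun θ => mod2pi (-θ)) = q) (hpi : q.map (fun θ => mod2pi (θ + π)) = q)
    (hsmall : d * exp (-T / (d - 1)) < 1) :
    tvDist (qKacMeasure d T q)
        (Measure.map
          (fun z : (Fin T → (Fin d × Fin d) × ℝ) × (Fin d → ℝ) =>
            kacMatrix z.1 * Matrix.diagonal z.2)
          ((Measure.pi fun _ : Fin T => qKacParam d q).prod (signMeasure d))) ≤
      d * exp (-T / (d - 1)) / (1 - d * exp (-T / (d - 1))) := by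
  rw [map_kacMatrix_mul_diagonal_eq_mconv]
  calc _ ≤ (Measure.pi fun _ : Fin T => pairUniform d).real {e | ¬ (pairGraph e).Preconnected} :=
        tvDist_qKacMeasure_le_real_not_preconnected hneg hpi
    _ ≤ (1 + exp (-T / (d - 1))) ^ d - 1 := pi_pairUniform_real_not_preconnected_le d T
    _ ≤ _ := one_add_pow_sub_one_le (exp_nonneg _) hsmall

/-- **Lemma 2.4**: for a symmetric `q`-Kac walk, the law of `Q_T` is close in total
variation to the law of `Q_T D_ξ`, where `ξ` is a uniform sign vector conditioned on
having product `1`, independent of the walk. -/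
theorem symmetric_kac_sign_invariance
    (d T : ℕ) (q : Measure ℝ) [IsProbabilityMeasure q]
    (hsupp : q (Set.Ico 0 (2 * Real.pi))ᶜ = 0)
    (hneg : Measure.map (fun θ => mod2pi (-θ)) q = q)
    (hshift : Measure.map (fun θ => mod2pi (θ + Real.pi / 2)) q = q)
    (hsmall : (d : ℝ) * Real.exp (-(T : ℝ) / ((d : ℝ) - 1)) < 1) :
    tvDist (qKacMeasure d T q)
        (Measure.map
          (fun z : (Fin T → (Fin d × Fin d) × ℝ) × (Fin d → ℝ) =>
            kacMatrix z.1 * Matrix.diagonal z.2)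
          ((Measure.pi fun _ : Fin T => qKacParam d q).prod (signMeasure d))) ≤
      (d : ℝ) * Real.exp (-(T : ℝ) / ((d : ℝ) - 1)) /
        (1 - (d : ℝ) * Real.exp (-(T : ℝ) / ((d : ℝ) - 1))) := by
  have hpi : q.map (fun θ => mod2pi (θ + π)) = q := by
    simpa only [add_halves] using map_mod2pi_add_add hshift hshift
  exact symmetric_kac_sign_invariance_general d T q hneg hpi hsmall

end KacJL
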